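/- Let A ∈ ℝ_{>0}^{2×2} be a symmetric entrywise-positive 2-spin interaction matrix with spin set {0,1}, and let d ≥ 1 be an integer. Then there exists a single universal collection of external fields λ^{(1)},…,λ^{(d)} ∈ ℝ_{≥0}^{d×2}, not depending on the input distribution, such that for every probability distribution μ on {0,1}^d one has F_{A,d}(μ) = F_{A,d}( ⊗_{i=1}^d (λ^{(i)} ⋆ μ)_i ). -/

import Mathlib

open scoped BigOperators Classical
open MeasureTheory

/-- A probability distribution on a finite type, represented as a nonnegative
function summing to one. -/
def IsProbDist {ι : Type*} [Fintype ι] (μ : ι → ℝ) : Prop :=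
  (∀ x, 0 ≤ μ x) ∧ ∑ x, μ x = 1

/-- The unnormalized belief propagation functional `G_c(μ) = E_{τ∼μ}[∏ i, A c (τ i)]`. -/
noncomputable def Gfun {q d : ℕ} (A : Matrix (Fin q) (Fin q) ℝ)
    (μ : (Fin d → Fin q) → ℝ) (c : Fin q) : ℝ :=
  ∑ σ : Fin d → Fin q, μ σ * ∏ i, A c (σ i)

/-- The belief propagation functional `F_{A,d,c}(μ) = G_c(μ) / ∑ b, G_b(μ)`. -/
noncomputable def Ffun {q d : ℕ} (A : Matrix (Fin q) (Fin q) ℝ)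
    (μ : (Fin d → Fin q) → ℝ) (c : Fin q) : ℝ :=
  Gfun A μ c / ∑ b, Gfun A μ b

/-- The product measure on `[k]^d` with marginals `ν i`. -/
noncomputable def prodMeasure {d k : ℕ} (ν : Fin d → Fin k → ℝ) :
    (Fin d → Fin k) → ℝ :=
  fun σ => ∏ i, ν i (σ i)

/-- The point mass `δ_b` at a spin `b`. -/
noncomputable def pointMass {k : ℕ} (b : Fin k) : Fin k → ℝ :=
  fun c => if c = b then 1 else 0

/-- The marginal of a distribution `μ` on `[k]^d` at coordinate `i`. -/
noncomputable def marg {d k : ℕ} (μ : (Fin d → Fin k) → ℝ) (i : Fin d) : Fin k → ℝ :=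
  fun b => ∑ σ : Fin d → Fin k, if σ i = b then μ σ else 0

/-- The tilt `λ ⋆ μ` of a distribution `μ` on `[k]^d` by an external field `λ`. -/
noncomputable def tilt {d k : ℕ} (lam : Fin d → Fin k → ℝ)
    (μ : (Fin d → Fin k) → ℝ) : (Fin d → Fin k) → ℝ :=
  fun σ => (μ σ * ∏ i, lam i (σ i)) / ∑ σ' : Fin d → Fin k, μ σ' * ∏ i, lam i (σ' i)

/-- The `(q+1) × (q+1)` interaction matrix `B(β,A) = [[β, 1ᵀ],[1, A]]`; the index `0`
plays the role of the special spin `c*`. -/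
noncomputable def Bmat {q : ℕ} (β : ℝ) (A : Matrix (Fin q) (Fin q) ℝ) :
    Matrix (Fin (q+1)) (Fin (q+1)) ℝ :=
  Matrix.of fun i j =>
    if hi : i = 0 then (if j = 0 then β else 1)
    else if hj : j = 0 then 1 else A (i.pred hi) (j.pred hj)

/-- `𝓜(d,A) = argmax_{b} ∑ c, A c b ^ d`. -/
def Mset {q : ℕ} (d : ℕ) (A : Matrix (Fin q) (Fin q) ℝ) : Set (Fin q) :=
  {b | ∀ b', ∑ c, A c b' ^ d ≤ ∑ c, A c b ^ d}

/-- `max_{b ∈ [q]} ∑ c, A c b ^ d` (as a supremum over the finite nonempty type `Fin q`). -/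
noncomputable def maxCol {q : ℕ} (d : ℕ) (A : Matrix (Fin q) (Fin q) ℝ) : ℝ :=
  ⨆ b, ∑ c, A c b ^ d


noncomputable def Hw {d : ℕ} (A : Matrix (Fin 2) (Fin 2) ℝ)
    (μ : (Fin d → Fin 2) → ℝ) (k : ℕ) : ℝ :=
  ∑ σ : Fin d → Fin 2, μ σ * ∏ j : Fin d, A (if j.val < k then 0 else 1) (σ j)

noncomputable def wlam {d : ℕ} (A : Matrix (Fin 2) (Fin 2) ℝ)
    (i j : Fin d) (c : Fin 2) : ℝ :=
  if j = i then 1 else A (if j.val < i.val then 0 else 1) c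

lemma sum_pos_of_prob {ι : Type*} [Fintype ι] {μ f : ι → ℝ} (hμ : IsProbDist μ)
    (hf : ∀ x, 0 < f x) : 0 < ∑ x, μ x * f x := by
  obtain ⟨h0, h1⟩ := hμ
  have hn : ∀ x ∈ Finset.univ, 0 ≤ μ x * f x := fun x _ => mul_nonneg (h0 x) (hf x).le
  refine lt_of_le_of_ne (Finset.sum_nonneg hn) fun h => ?_
  have := (Finset.sum_eq_zero_iff_of_nonneg hn).1 h.symm
  have h2 : ∑ x, μ x = 0 := Finset.sum_eq_zero fun x hx => by
    rcases mul_eq_zero.1 (this x hx) with h | h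
    · exact h
    · exact absurd h (hf x).ne'
  linarith

lemma Gfun_prod {d : ℕ} (A : Matrix (Fin 2) (Fin 2) ℝ) (ν : Fin d → Fin 2 → ℝ) (c : Fin 2) :
    Gfun A (prodMeasure ν) c = ∏ i, ∑ b, ν i b * A c b := by
  rw [Finset.prod_univ_sum, Fintype.piFinset_univ]
  simp [Gfun, prodMeasure, Finset.prod_mul_distrib]

lemma marg_sum {d : ℕ} (A : Matrix (Fin 2) (Fin 2) ℝ) (μ : (Fin d → Fin 2) → ℝ)
    (i : Fin d) (c : Fin 2) :
    ∑ b, marg μ i b * A c b = ∑ σ, μ σ * A c (σ i) := by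
  simp only [marg, Finset.sum_mul]
  rw [Finset.sum_comm]
  refine Finset.sum_congr rfl fun σ _ => ?_
  simp [ite_mul]

lemma wprod {d : ℕ} (A : Matrix (Fin 2) (Fin 2) ℝ) (i : Fin d) (c : Fin 2) (k : ℕ)
    (σ : Fin d → Fin 2)
    (hk : c = if i.val < k then 0 else 1)
    (hk2 : ∀ j : Fin d, j ≠ i → (j.val < k ↔ j.val < i.val)) :
    (∏ j, wlam A i j (σ j)) * A c (σ i)
      = ∏ j : Fin d, A (if j.val < k then 0 else 1) (σ j) := by
  rw [← Finset.mul_prod_erase _ _ (Finset.mem_univ i),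
    ← Finset.mul_prod_erase Finset.univ (fun j : Fin d => A (if j.val < k then 0 else 1) (σ j))
      (Finset.mem_univ i), ← hk]
  have : ∏ x ∈ Finset.univ.erase i, wlam A i x (σ x)
      = ∏ x ∈ Finset.univ.erase i, A (if x.val < k then 0 else 1) (σ x) := by
    refine Finset.prod_congr rfl fun j hj => ?_
    have hj := Finset.ne_of_mem_erase hj
    simp only [wlam, if_neg hj, hk2 j hj]
  rw [this]
  simp [wlam, mul_comm]

lemma tilt_sum {d : ℕ} (A : Matrix (Fin 2) (Fin 2) ℝ) (μ : (Fin d → Fin 2) → ℝ)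
    (i : Fin d) (c : Fin 2) (k : ℕ)
    (hk : c = if i.val < k then 0 else 1)
    (hk2 : ∀ j : Fin d, j ≠ i → (j.val < k ↔ j.val < i.val)) :
    ∑ b, marg (tilt (wlam A i) μ) i b * A c b
      = Hw A μ k / ∑ σ, μ σ * ∏ j, wlam A i j (σ j) := by
  rw [marg_sum, Hw, Finset.sum_div]
  refine Finset.sum_congr rfl fun σ _ => ?_
  rw [← wprod A i c k σ hk hk2, tilt]
  ring

theorem stmt9 (d : ℕ) (hd : 1 ≤ d)
    (A : Matrix (Fin 2) (Fin 2) ℝ) (hsymm : A.IsSymm) (hpos : ∀ c b, 0 < A c b) :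
    ∃ lam : Fin d → Fin d → Fin 2 → ℝ,
      (∀ i j c, 0 ≤ lam i j c) ∧
      ∀ μ : (Fin d → Fin 2) → ℝ, IsProbDist μ →
        ∀ c, Ffun A μ c =
          Ffun A (prodMeasure (fun i => marg (tilt (lam i) μ) i)) c := by
  have hw : ∀ (i j : Fin d) c, 0 < wlam A i j c := by
    intro i j c
    unfold wlam
    split_ifs
    · exact one_pos
    all_goals exact hpos _ _
  refine ⟨wlam A, fun i j c => (hw i j c).le, fun μ hμ => ?_⟩
  have hZ : ∀ i : Fin d, 0 < ∑ σ, μ σ * ∏ j, wlam A i j (σ j) := fun i =>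
    sum_pos_of_prob hμ fun σ => Finset.prod_pos fun j _ => hw _ _ _
  have hH : ∀ k, 0 < Hw A μ k := fun k =>
    sum_pos_of_prob hμ fun σ => Finset.prod_pos fun j _ => hpos _ _
  have g0 : Gfun A μ 0 = Hw A μ d := by simp [Gfun, Hw]
  have g1 : Gfun A μ 1 = Hw A μ 0 := by simp [Gfun, Hw]
  have p0 := Gfun_prod A (fun i => marg (tilt (wlam A i) μ) i) 0
  have p1 := Gfun_prod A (fun i => marg (tilt (wlam A i) μ) i) 1
  rw [Finset.prod_congr rfl fun i _ => tilt_sum A μ i 0 (i.val + 1) (by simp)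
    (fun j hj => by have := Fin.val_ne_of_ne hj; omega), Finset.prod_div_distrib] at p0
  rw [Finset.prod_congr rfl fun i _ => tilt_sum A μ i 1 i.val (by simp)
    (fun j hj => Iff.rfl), Finset.prod_div_distrib] at p1
  have hP := Finset.prod_pos fun (i : Fin d) (_ : i ∈ Finset.univ) => hZ i
  have tel : (∏ i : Fin d, Hw A μ (i.val + 1)) * Hw A μ 0
      = (∏ i : Fin d, Hw A μ i.val) * Hw A μ d := by
    rw [Fin.prod_univ_eq_prod_range (fun k => Hw A μ (k + 1)),
      Fin.prod_univ_eq_prod_range (fun k => Hw A μ k),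
      ← Finset.prod_range_succ, ← Finset.prod_range_succ']
  have a0 : 0 < ∏ i : Fin d, Hw A μ (i.val + 1) := Finset.prod_pos fun i _ => hH _
  have a1 : 0 < ∏ i : Fin d, Hw A μ i.val := Finset.prod_pos fun i _ => hH _
  have q0 := div_pos a0 hP
  have q1 := div_pos a1 hP
  rw [← p0] at q0
  rw [← p1] at q1
  have key : Gfun A (prodMeasure fun i => marg (tilt (wlam A i) μ) i) 0 * Gfun A μ 1
      = Gfun A (prodMeasure fun i => marg (tilt (wlam A i) μ) i) 1 * Gfun A μ 0 := by
    rw [p0, p1, g0, g1, div_mul_eq_mul_div, div_mul_eq_mul_div, tel]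
  have r0 := hH d
  have r1 := hH 0
  rw [← g0] at r0
  rw [← g1] at r1
  intro c
  simp only [Ffun, Fin.sum_univ_two]
  rw [div_eq_div_iff (by positivity) (by positivity)]
  fin_cases c
  · simp only [Fin.zero_eta]; linarith
  · simp only [Fin.mk_one]; linarith
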